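/- (Exchange step in the proof of Lemma 1) Let V be a finite nonempty type, κ ≥ 1, z : V → Fin κ a partition of V into blocks, and S : V → V → ℝ a block-supported nonnegative similarity (S i j ≥ 0 for all i, j, and S i j = 0 whenever z i ≠ z j). Let F(C) = ∑_{p ∈ V} max_{c ∈ C} S p c be the facility-location function. Suppose a finite subset C of V contains two distinct elements i and j with z i = z j such that i dominates j on their block (for every p with z p = z j, S p i ≥ S p j), and suppose there is a block b ∈ Fin κ with C ∩ z⁻¹(b) = ∅ containing an element j' (z j' = b) with S j' j' > 0. Then F((C \ {j}) ∪ {j'}) > F(C). -/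

import Mathlib

/-!
The strict increase is checked term by term. For every point `p`, deleting `j` loses nothing: on the
block of `j` the value `S p j` is matched by `S p i`, and off that block `S p j = 0 ≤ S p i`. At
`p = j'` the gain is strict, because no element of `C` lies in the block of `j'`, so the old term
is `0`, while the new one is at least `S j' j' > 0`.
-/

/-- Max of `f` over a finite set, taken to be `0` on the empty set. -/
noncomputable def maxOr0 {V : Type*} (C : Finset V) (f : V → ℝ) : ℝ :=
  if h : C.Nonempty then C.sup' h f else 0

/-- The facility-location set function `F(C) = ∑ p, max_{c ∈ C} S p c`. -/
noncomputable def facilityLocation {V : Type*} [Fintype V] (S : V → V → ℝ)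
    (C : Finset V) : ℝ :=
  ∑ p : V, maxOr0 C (S p)

theorem le_maxOr0 {V : Type*} {C : Finset V} (f : V → ℝ) {c : V} (hc : c ∈ C) :
    f c ≤ maxOr0 C f := by
  rw [maxOr0, dif_pos ⟨c, hc⟩]
  exact Finset.le_sup' f hc

theorem maxOr0_le {V : Type*} {C : Finset V} {f : V → ℝ} {a : ℝ} (hC : C.Nonempty)
    (h : ∀ c ∈ C, f c ≤ a) : maxOr0 C f ≤ a := by
  rw [maxOr0, dif_pos hC]
  exact Finset.sup'_le hC f h

theorem stmt_6 {V : Type*} [Fintype V] [Nonempty V] [DecidableEq V] (κ : ℕ) (hκ : 1 ≤ κ)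
    (z : V → Fin κ) (S : V → V → ℝ)
    (hS_nonneg : ∀ i j, 0 ≤ S i j)
    (hS_block : ∀ i j, z i ≠ z j → S i j = 0)
    (C : Finset V) (i j : V) (hi : i ∈ C) (hj : j ∈ C) (hij : i ≠ j)
    (hz : z i = z j)
    (hdom : ∀ p, z p = z j → S p j ≤ S p i)
    (b : Fin κ) (hb : ∀ c ∈ C, z c ≠ b)
    (j' : V) (hj' : z j' = b) (hj'pos : 0 < S j' j') :
    facilityLocation S C < facilityLocation S (insert j' (C.erase j)) := by
  have hi_mem : i ∈ insert j' (C.erase j) :=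
    Finset.mem_insert_of_mem (Finset.mem_erase.2 ⟨hij, hi⟩)
  have hdom_all : ∀ p, S p j ≤ S p i := by
    intro p
    by_cases hp : z p = z j
    · exact hdom p hp
    · rw [hS_block p j hp]
      exact hS_nonneg p i
  unfold facilityLocation
  refine Finset.sum_lt_sum (fun p _ => ?_) ⟨j', Finset.mem_univ _, ?_⟩
  · refine maxOr0_le ⟨i, hi⟩ fun c hc => ?_
    by_cases hcj : c = j
    · rw [hcj]
      exact (hdom_all p).trans (le_maxOr0 (S p) hi_mem)
    · exact le_maxOr0 (S p) (Finset.mem_insert_of_mem (Finset.mem_erase.2 ⟨hcj, hc⟩))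
  · have h_old : maxOr0 C (S j') ≤ 0 := maxOr0_le ⟨i, hi⟩ fun c hc =>
      (hS_block j' c fun h => hb c hc (h.symm.trans hj')).le
    exact h_old.trans_lt (hj'pos.trans_le (le_maxOr0 (S j') (Finset.mem_insert_self _ _)))
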